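/- Let A be a unital C*-algebra with a tracial state τ. Let x ∈ A and α > 0 satisfy ‖[x, y]‖₂ ≥ α ‖y − τ(y)·1‖₂ for every selfadjoint y ∈ A. Then ‖[x, y]‖₂ + ‖[x*, y]‖₂ ≥ α ‖y − τ(y)·1‖₂ for every y ∈ A. -/

import Mathlib

/-- The trace 2-norm `‖x‖₂ = √(Re τ(x*x))` associated with a tracial state `τ`. -/
noncomputable def traceNorm2 {A : Type*} [NormedRing A] [StarRing A] [NormedAlgebra ℂ A]
    (τ : A →ₗ[ℂ] ℂ) (x : A) : ℝ :=
  Real.sqrt (τ (star x * x)).re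

/-!
A complex-linear map `T` satisfies `‖T y‖₂² + ‖T y*‖₂² = 2 (‖T (Re y)‖₂² + ‖T (Im y)‖₂²)`, by the
parallelogram law. Applying this both to `y ↦ y - τ(y)1` and to `y ↦ [x, y]` transfers the
inequality from the selfadjoint elements `Re y`, `Im y` to
`α² ‖y - τ(y)1‖₂² ≤ ‖[x, y]‖₂² + ‖[x, y*]‖₂²`, and `‖[x, y*]‖₂ = ‖[x*, y]‖₂` because `‖·‖₂` is
invariant under the involution.
-/

section TraceNorm2

open scoped ComplexStarModule

variable {A : Type*} [NormedRing A] [StarRing A] [NormedAlgebra ℂ A] {τ : A →ₗ[ℂ] ℂ}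

theorem traceNorm2_nonneg (τ : A →ₗ[ℂ] ℂ) (a : A) : 0 ≤ traceNorm2 τ a :=
  Real.sqrt_nonneg _

theorem traceNorm2_neg (τ : A →ₗ[ℂ] ℂ) (a : A) : traceNorm2 τ (-a) = traceNorm2 τ a := by
  simp only [traceNorm2, star_neg, neg_mul_neg]

theorem traceNorm2_star (hτtr : ∀ a b : A, τ (a * b) = τ (b * a)) (a : A) :
    traceNorm2 τ (star a) = traceNorm2 τ a := by
  rw [traceNorm2, traceNorm2, star_star, hτtr]

theorem traceNorm2_smul [StarModule ℂ A] (τ : A →ₗ[ℂ] ℂ) (c : ℂ) (a : A) :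
    traceNorm2 τ (c • a) = ‖c‖ * traceNorm2 τ a := by
  have re_eq : (τ (star (c • a) * (c • a))).re = ‖c‖ ^ 2 * (τ (star a * a)).re := by
    rw [star_smul, smul_mul_smul_comm, map_smul, smul_eq_mul, Complex.star_def, Complex.conj_mul',
      ← Complex.ofReal_pow, Complex.re_ofReal_mul]
  rw [traceNorm2, traceNorm2, re_eq, Real.sqrt_mul (sq_nonneg _), Real.sqrt_sq (norm_nonneg c)]

theorem traceNorm2_sq (hτpos : ∀ a : A, 0 ≤ (τ (star a * a)).re) (a : A) :
    traceNorm2 τ a ^ 2 = (τ (star a * a)).re :=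
  Real.sq_sqrt (hτpos a)

theorem traceNorm2_add_sq_add_traceNorm2_sub_sq
    (hτpos : ∀ a : A, 0 ≤ (τ (star a * a)).re) (a b : A) :
    traceNorm2 τ (a + b) ^ 2 + traceNorm2 τ (a - b) ^ 2 =
      2 * (traceNorm2 τ a ^ 2 + traceNorm2 τ b ^ 2) := by
  have star_mul_self_add : star (a + b) * (a + b) + star (a - b) * (a - b) =
      2 • (star a * a + star b * b) := by
    rw [star_add, star_sub]
    noncomm_ring
  simp only [traceNorm2_sq hτpos]
  rw [← Complex.add_re, ← map_add, star_mul_self_add, map_nsmul, map_add, Complex.re_nsmul,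
    Complex.add_re, nsmul_eq_mul, Nat.cast_ofNat]

theorem traceNorm2_lie_star (hτtr : ∀ a b : A, τ (a * b) = τ (b * a)) (x y : A) :
    traceNorm2 τ ⁅x, star y⁆ = traceNorm2 τ ⁅star x, y⁆ := by
  have star_lie : star ⁅star x, y⁆ = -⁅x, star y⁆ := by simp [Ring.lie_def]
  rw [← traceNorm2_neg, ← star_lie, traceNorm2_star hτtr]

section LinearMap

variable [StarModule ℂ A] {E : Type*} [AddCommGroup E] [Module ℂ E] [StarAddMonoid E]
  [StarModule ℂ E]

theorem traceNorm2_map_sq_add_traceNorm2_map_star_sq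
    (hτpos : ∀ a : A, 0 ≤ (τ (star a * a)).re) (T : E →ₗ[ℂ] A) (y : E) :
    traceNorm2 τ (T y) ^ 2 + traceNorm2 τ (T (star y)) ^ 2 =
      2 * (traceNorm2 τ (T (ℜ y)) ^ 2 + traceNorm2 τ (T (ℑ y)) ^ 2) := by
  have map_eq : T y = T (ℜ y) + Complex.I • T (ℑ y) := by
    rw [← map_smul, ← map_add, realPart_add_I_smul_imaginaryPart]
  have map_star_eq : T (star y) = T (ℜ y) - Complex.I • T (ℑ y) := by
    conv_lhs => rw [← realPart_add_I_smul_imaginaryPart y]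
    simp [sub_eq_add_neg]
  rw [map_eq, map_star_eq, traceNorm2_add_sq_add_traceNorm2_sub_sq hτpos, traceNorm2_smul,
    Complex.norm_I, one_mul]

theorem mul_traceNorm2_map_sq_le_of_isSelfAdjoint
    (hτpos : ∀ a : A, 0 ≤ (τ (star a * a)).re) (S T : E →ₗ[ℂ] A) {α : ℝ} (hα : 0 ≤ α)
    (h : ∀ y : E, IsSelfAdjoint y → α * traceNorm2 τ (S y) ≤ traceNorm2 τ (T y)) (y : E) :
    (α * traceNorm2 τ (S y)) ^ 2 ≤ traceNorm2 τ (T y) ^ 2 + traceNorm2 τ (T (star y)) ^ 2 := by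
  have h_sq (z : selfAdjoint E) :
      α ^ 2 * traceNorm2 τ (S z) ^ 2 ≤ traceNorm2 τ (T z) ^ 2 := by
    rw [← mul_pow]
    exact pow_le_pow_left₀ (mul_nonneg hα (traceNorm2_nonneg τ _)) (h z z.2) 2
  calc (α * traceNorm2 τ (S y)) ^ 2
      = α ^ 2 * traceNorm2 τ (S y) ^ 2 := mul_pow ..
    _ ≤ α ^ 2 * (traceNorm2 τ (S y) ^ 2 + traceNorm2 τ (S (star y)) ^ 2) := by
        gcongr
        exact le_add_of_nonneg_right (sq_nonneg _)
    _ = 2 * (α ^ 2 * traceNorm2 τ (S (ℜ y)) ^ 2 + α ^ 2 * traceNorm2 τ (S (ℑ y)) ^ 2) := by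
        rw [traceNorm2_map_sq_add_traceNorm2_map_star_sq hτpos]
        ring
    _ ≤ 2 * (traceNorm2 τ (T (ℜ y)) ^ 2 + traceNorm2 τ (T (ℑ y)) ^ 2) := by
        gcongr <;> exact h_sq _
    _ = traceNorm2 τ (T y) ^ 2 + traceNorm2 τ (T (star y)) ^ 2 :=
        (traceNorm2_map_sq_add_traceNorm2_map_star_sq hτpos T y).symm

end LinearMap

theorem spectral_gap_all_of_spectral_gap_selfAdjoint_general [StarModule ℂ A]
    (hτpos : ∀ a : A, 0 ≤ (τ (star a * a)).re) (hτtr : ∀ a b : A, τ (a * b) = τ (b * a))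
    (x : A) (α : ℝ)
    (h : ∀ y : A, star y = y →
      α * traceNorm2 τ (y - τ y • 1) ≤ traceNorm2 τ (x * y - y * x)) (y : A) :
    α * traceNorm2 τ (y - τ y • 1) ≤
      traceNorm2 τ (x * y - y * x) + traceNorm2 τ (star x * y - y * star x) := by
  simp only [← Ring.lie_def] at h ⊢
  have rhs_nonneg : 0 ≤ traceNorm2 τ ⁅x, y⁆ + traceNorm2 τ ⁅star x, y⁆ :=
    add_nonneg (traceNorm2_nonneg τ _) (traceNorm2_nonneg τ _)
  obtain hα | hα := le_total α 0
  · exact (mul_nonpos_of_nonpos_of_nonneg hα (traceNorm2_nonneg τ _)).trans rhs_nonneg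
  have gap := mul_traceNorm2_map_sq_le_of_isSelfAdjoint hτpos
    (LinearMap.id - τ.smulRight 1) (LinearMap.mulLeft ℂ x - LinearMap.mulRight ℂ x) hα
  simp only [LinearMap.sub_apply, LinearMap.id_apply, LinearMap.smulRight_apply,
    LinearMap.mulLeft_apply, LinearMap.mulRight_apply, ← Ring.lie_def] at gap
  refine le_of_sq_le_sq ?_ rhs_nonneg
  calc (α * traceNorm2 τ (y - τ y • 1)) ^ 2
      ≤ traceNorm2 τ ⁅x, y⁆ ^ 2 + traceNorm2 τ ⁅x, star y⁆ ^ 2 := gap h y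
    _ = traceNorm2 τ ⁅x, y⁆ ^ 2 + traceNorm2 τ ⁅star x, y⁆ ^ 2 := by
        rw [traceNorm2_lie_star hτtr]
    _ ≤ (traceNorm2 τ ⁅x, y⁆ + traceNorm2 τ ⁅star x, y⁆) ^ 2 :=
        pow_add_pow_le (traceNorm2_nonneg τ _) (traceNorm2_nonneg τ _) two_ne_zero

end TraceNorm2

/-- If `‖[x,y]‖₂ ≥ α‖y − τ(y)1‖₂` for all selfadjoint `y`, then
`‖[x,y]‖₂ + ‖[x*,y]‖₂ ≥ α‖y − τ(y)1‖₂` for all `y`. -/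
theorem spectral_gap_all_of_spectral_gap_selfAdjoint
    {A : Type*} [NormedRing A] [StarRing A] [CStarRing A] [CompleteSpace A]
    [NormedAlgebra ℂ A] [StarModule ℂ A]
    (τ : A →ₗ[ℂ] ℂ)
    (hτ1 : τ 1 = 1)
    (hτpos : ∀ x : A, 0 ≤ (τ (star x * x)).re)
    (hτreal : ∀ x : A, (τ (star x * x)).im = 0)
    (hτtr : ∀ x y : A, τ (x * y) = τ (y * x))
    (x : A) (α : ℝ) (hα : 0 < α)
    (h : ∀ y : A, star y = y →
      α * traceNorm2 τ (y - τ y • 1) ≤ traceNorm2 τ (x * y - y * x)) :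
    ∀ y : A, α * traceNorm2 τ (y - τ y • 1) ≤
      traceNorm2 τ (x * y - y * x) + traceNorm2 τ (star x * y - y * star x) :=
  spectral_gap_all_of_spectral_gap_selfAdjoint_general hτpos hτtr x α h
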